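/- arXiv:2408.06919 — 2 statements merged into one kernel-verified Lean document; each statement's English description precedes it below -/
import Mathlib

section
/- The Poincaré return map of the rotating Kepler problem is a well-defined self-map of the page of the geodesic open book: for every (ξ, η) ∈ P, the point f(ξ, η) = (ξ₀, R_{T(c−L(ξ,η))}(ξ₁, ξ₂), 0; η₀, R_{T(c−L(ξ,η))}(η₁, η₂), η₃) again lies in P; that is, writing f(ξ,η) = (ξ', η'), one has ⟨ξ', η'⟩ = 0, ‖ξ'‖ = 1, Q(ξ', η') = ½, ξ₃' = 0 and η₃' ≥ 0. -/
noncomputable section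

/-- Phase-space points: pairs `(ξ, η) ∈ ℝ⁴ × ℝ⁴`. -/
abbrev Pt := (Fin 4 → ℝ) × (Fin 4 → ℝ)

/-- Euclidean norm on `ℝ⁴` (written componentwise). -/
def nrm4 (v : Fin 4 → ℝ) : ℝ := Real.sqrt (v 0 ^ 2 + v 1 ^ 2 + v 2 ^ 2 + v 3 ^ 2)

/-- Euclidean inner product on `ℝ⁴`. -/
def inner4 (v w : Fin 4 → ℝ) : ℝ := v 0 * w 0 + v 1 * w 1 + v 2 * w 2 + v 3 * w 3

/-- The angular momentum `L(ξ,η) = ξ₂η₁ − ξ₁η₂`. -/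
def angL (x : Pt) : ℝ := x.1 2 * x.2 1 - x.1 1 * x.2 2

/-- `f̂(ξ,η) = 1 + (1 − ξ₀)(−c − ½ + L(ξ,η))`. -/
def fhat (c : ℝ) (x : Pt) : ℝ := 1 + (1 - x.1 0) * (-c - 1 / 2 + angL x)

/-- The Moser-regularized rotating Kepler Hamiltonian `Q(ξ,η) = ½ f̂(ξ,η)² ‖η‖²`. -/
def Qham (c : ℝ) (x : Pt) : ℝ := (1 / 2) * (fhat c x) ^ 2 * (nrm4 x.2) ^ 2

/-- The period `T(K) = π/(2(−K)^{3/2})` of a Kepler ellipse of energy `K < 0`,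
extended by `0` for `K ≥ 0`. -/
def period (K : ℝ) : ℝ :=
  if K < 0 then Real.pi / (2 * (-K) ^ ((3 : ℝ) / 2)) else 0

/-- Rotation of `ℝ²` by angle `φ`. -/
def Rot (φ : ℝ) (a b : ℝ) : ℝ × ℝ :=
  (Real.cos φ * a - Real.sin φ * b, Real.sin φ * a + Real.cos φ * b)

/-- Membership in the page `P = {(ξ,η) ∈ T*S³ : Q = ½, ξ₃ = 0, η₃ ≥ 0}`, where
`T*S³ = {(ξ,η) : ⟨ξ,η⟩ = 0, ‖ξ‖ = 1}`. -/
def memP (c : ℝ) (x : Pt) : Prop :=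
  inner4 x.1 x.2 = 0 ∧ nrm4 x.1 = 1 ∧ Qham c x = 1 / 2 ∧ x.1 3 = 0 ∧ 0 ≤ x.2 3

/-- Membership in the collision locus `C = {(ξ,η) ∈ P : ξ₀ = 1}`. -/
def memC (c : ℝ) (x : Pt) : Prop := memP c x ∧ x.1 0 = 1

/-- The Poincaré return map
`f(ξ₀,ξ₁,ξ₂,0; η₀,η₁,η₂,η₃) = (ξ₀, R_{T(c−L)}(ξ₁,ξ₂), 0; η₀, R_{T(c−L)}(η₁,η₂), η₃)`. -/
def ret (c : ℝ) (x : Pt) : Pt :=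
  (![x.1 0, (Rot (period (c - angL x)) (x.1 1) (x.1 2)).1,
      (Rot (period (c - angL x)) (x.1 1) (x.1 2)).2, 0],
   ![x.2 0, (Rot (period (c - angL x)) (x.2 1) (x.2 2)).1,
      (Rot (period (c - angL x)) (x.2 1) (x.2 2)).2, x.2 3])

/-- the Poincaré return map is a well-defined self-map of the page. -/
theorem return_map_maps_page_to_page
    (c : ℝ) (hc : c < -(3 / 2)) (x : Pt) (hx : memP c x) :
    memP c (ret c x) := by
  obtain ⟨h1, h2, h3, h4, h5⟩ := hx
  have hL : angL (ret c x) = angL x := by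
    simp only [ret]
    generalize period (c - angL x) = t
    have ht := Real.sin_sq_add_cos_sq t
    simp only [angL, Rot, Matrix.cons_val]
    linear_combination (x.1 2 * x.2 1 - x.1 1 * x.2 2) * ht
  have hη : nrm4 (ret c x).2 = nrm4 x.2 := by
    simp only [ret]
    generalize period (c - angL x) = t
    have ht := Real.sin_sq_add_cos_sq t
    simp only [nrm4, Rot, Matrix.cons_val]
    congr 1
    linear_combination (x.2 1 ^ 2 + x.2 2 ^ 2) * ht
  have hξ : nrm4 (ret c x).1 = nrm4 x.1 := by
    simp only [ret]
    generalize period (c - angL x) = t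
    have ht := Real.sin_sq_add_cos_sq t
    simp only [nrm4, Rot, Matrix.cons_val, h4]
    congr 1
    linear_combination (x.1 1 ^ 2 + x.1 2 ^ 2) * ht
  have hin : inner4 (ret c x).1 (ret c x).2 = inner4 x.1 x.2 := by
    simp only [ret]
    generalize period (c - angL x) = t
    have ht := Real.sin_sq_add_cos_sq t
    simp only [inner4, Rot, Matrix.cons_val, h4]
    linear_combination (x.1 1 * x.2 1 + x.1 2 * x.2 2) * ht
  have h0 : (ret c x).1 0 = x.1 0 := by simp [ret]
  refine ⟨hin.trans h1, hξ.trans h2, ?_, by simp [ret], by simpa [ret] using h5⟩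
  unfold Qham fhat at h3 ⊢
  rw [hη, hL, h0]
  exact h3

end
end

section
/- The rotating Kepler problem has infinitely many consecutive collision orbits of every order, all of minimal order 1: for every integer k ≥ 1 and every x ∈ C, the iterate f^k(x) again lies in C (so every point of C is a chord of order k of the collision Lagrangian C, and in particular of minimal order 1), and the set C is infinite. -/
noncomputable section

/-- Explicit description of the collision locus. -/
theorem memC_iff (c : ℝ) (x : Pt) : memC c x ↔
    x.1 0 = 1 ∧ x.1 1 = 0 ∧ x.1 2 = 0 ∧ x.1 3 = 0 ∧ x.2 0 = 0 ∧
      x.2 1 ^ 2 + x.2 2 ^ 2 + x.2 3 ^ 2 = 1 ∧ 0 ≤ x.2 3 := by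
  unfold memC memP Qham fhat inner4 nrm4
  constructor
  · rintro ⟨⟨h1, h2, h3, h4, h5⟩, h0⟩
    rw [Real.sqrt_eq_one, h0, h4] at h2
    have a1 : x.1 1 = 0 := by nlinarith [sq_nonneg (x.1 1), sq_nonneg (x.1 2)]
    have a2 : x.1 2 = 0 := by nlinarith [sq_nonneg (x.1 1), sq_nonneg (x.1 2)]
    have a3 : x.2 0 = 0 := by
      rw [h0, a1, a2, h4] at h1
      linarith
    rw [Real.sq_sqrt (by positivity), h0, a3] at h3
    exact ⟨h0, a1, a2, h4, a3, by linarith, h5⟩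
  · rintro ⟨h0, a1, a2, h4, a3, h3, h5⟩
    refine ⟨⟨?_, ?_, ?_, h4, h5⟩, h0⟩
    · rw [h0, a1, a2, h4, a3]; ring
    · rw [Real.sqrt_eq_one, h0, a1, a2, h4]; ring
    · rw [Real.sq_sqrt (by positivity), h0, a3]; linarith

theorem memC_ret (c : ℝ) (x : Pt) (h : memC c x) : memC c (ret c x) := by
  rw [memC_iff] at h ⊢
  obtain ⟨h0, a1, a2, h4, a3, h3, h5⟩ := h
  refine ⟨?_, ?_, ?_, ?_, ?_, ?_, ?_⟩
  · simpa [ret] using h0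
  · simp [ret, Rot, a1, a2]
  · simp [ret, Rot, a1, a2]
  · simp [ret]
  · simpa [ret] using a3
  · simp only [ret, Rot, Matrix.cons_val]
    generalize period (c - angL x) = φ
    linear_combination h3 + (x.2 1 ^ 2 + x.2 2 ^ 2) * Real.sin_sq_add_cos_sq φ
  · simpa [ret] using h5

/-- for every `k ≥ 1`, every point of the collision locus `C` is a
chord of order `k` (so in particular of minimal order `1`): `f^[k]` maps `C`
into `C`; moreover `C` is infinite, so there are infinitely many consecutive
collision orbits of every order. -/
theorem infinitely_many_collision_chords_of_every_order
    (c : ℝ) (hc : c < -(3 / 2)) :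
    (∀ k : ℕ, 1 ≤ k → ∀ x : Pt, memC c x → memC c ((ret c)^[k] x)) ∧
    {x : Pt | memC c x}.Infinite := by
  refine ⟨?_, ?_⟩
  · intro k _ x hx
    induction k with
    | zero => simpa using hx
    | succ n ih =>
      rw [Function.iterate_succ_apply']
      rcases Nat.eq_zero_or_pos n with rfl | hn
      · exact memC_ret c _ hx
      · exact memC_ret c _ (ih hn)
  · refine Set.infinite_of_injOn_mapsTo (s := Set.Icc (0 : ℝ) 1)
      (f := fun t => ((![1, 0, 0, 0], ![0, 0, Real.sqrt (1 - t ^ 2), t]) : Pt)) ?_ ?_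
      (Set.Icc_infinite zero_lt_one)
    · intro s _ t _ hst
      have := congrFun (congrArg Prod.snd hst) 3
      simpa using this
    · intro t ht
      have h1 : 0 ≤ 1 - t ^ 2 := by nlinarith [ht.1, ht.2]
      change memC c _
      rw [memC_iff]
      simp [Real.sq_sqrt h1, ht.1]

end
end
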